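/- Let r > 0, α > 1, γ = (α−1)/r, ω ∈ ℝ, 0 ≤ φ < 1 and τ > 0. Define for real y ≥ 0 and λ > 0 the score s(y, λ) = γλ·(ψ(γλ+y) + ψ(γλ+α) − ψ(γλ+y+α+r) − ψ(γλ)) and the updating function g(y, λ) = exp(ω + φ·log λ + τ·s(y, λ)). Then for every λ ≥ exp((ω − τ(α+r+1))/(1−φ)) and every real y ≥ 0, the partial derivative of g with respect to λ satisfies |∂g(y, λ)/∂λ| ≤ (τ·(3α+2r+3) + φ)·exp(τ(2α+r+2)). -/

import Mathlib

noncomputable def digamma (x : ℝ) : ℝ := deriv (fun t => Real.log (Real.Gamma t)) x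

noncomputable def bnbScore (r a lam y : ℝ) : ℝ :=
  ((a - 1) / r) * lam *
    (digamma (((a - 1) / r) * lam + y) + digamma (((a - 1) / r) * lam + a) -
      digamma (((a - 1) / r) * lam + y + a + r) - digamma (((a - 1) / r) * lam))

noncomputable def gasUpdate (r a om ph ta y lam : ℝ) : ℝ :=
  Real.exp (om + ph * Real.log lam + ta * bnbScore r a lam y)

open Real Set Filter Topology

lemma analyticAt_log_Gamma {x : ℝ} (hx : 0 < x) :
    AnalyticAt ℝ (fun t => log (Gamma t)) x := by
  have hC : AnalyticAt ℂ Complex.Gamma (x : ℂ) := by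
    have hopen : IsOpen {z : ℂ | 0 < z.re} := isOpen_lt continuous_const Complex.continuous_re
    refine DifferentiableOn.analyticAt (s := {z : ℂ | 0 < z.re}) (fun z hz => ?_)
      (hopen.mem_nhds (by simpa using hx))
    refine (Complex.differentiableAt_Gamma z fun m hm => ?_).differentiableWithinAt
    have hz' : 0 < z.re := hz
    rw [hm] at hz'
    simp only [Complex.neg_re, Complex.natCast_re, Left.neg_pos_iff] at hz'
    exact absurd hz' (not_lt.mpr m.cast_nonneg)
  have hR : AnalyticAt ℝ Gamma x := by
    rw [← analyticWithinAt_univ, ← contDiffWithinAt_omega_iff_analyticWithinAt,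
      contDiffWithinAt_univ]
    exact hC.contDiffAt.real_of_complex
  exact hR.log (Gamma_pos_of_pos hx)

lemma differentiableAt_log_Gamma {x : ℝ} (hx : 0 < x) :
    DifferentiableAt ℝ (fun t => log (Gamma t)) x :=
  (analyticAt_log_Gamma hx).differentiableAt

lemma differentiableAt_digamma {x : ℝ} (hx : 0 < x) : DifferentiableAt ℝ digamma x :=
  (analyticAt_log_Gamma hx).deriv.differentiableAt

lemma digamma_add_one {x : ℝ} (hx : 0 < x) : digamma (x + 1) = digamma x + x⁻¹ := by
  have heq : (fun t => log (Gamma (t + 1))) =ᶠ[𝓝 x] fun t => log (Gamma t) + log t := by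
    filter_upwards [lt_mem_nhds hx] with t ht
    rw [Gamma_add_one ht.ne', log_mul ht.ne' (Gamma_pos_of_pos ht).ne', add_comm]
  rw [digamma, ← deriv_comp_add_const (fun t => log (Gamma t)), heq.deriv_eq,
    deriv_fun_add (differentiableAt_log_Gamma hx) (differentiableAt_log hx.ne'), deriv_log, digamma]

lemma deriv_digamma_add_one {x : ℝ} (hx : 0 < x) :
    deriv digamma (x + 1) = deriv digamma x - (x ^ 2)⁻¹ := by
  have heq : (fun t => digamma (t + 1)) =ᶠ[𝓝 x] fun t => digamma t + t⁻¹ := by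
    filter_upwards [lt_mem_nhds hx] with t ht using digamma_add_one ht
  rw [← deriv_comp_add_const digamma, heq.deriv_eq,
    deriv_fun_add (differentiableAt_digamma hx) (differentiableAt_inv hx.ne'), deriv_inv]
  ring

lemma monotoneOn_digamma : MonotoneOn digamma (Ioi 0) :=
  convexOn_log_Gamma.monotoneOn_deriv fun _ hx => differentiableAt_log_Gamma hx

lemma convexOn_log_add_sub_log {h : ℝ} (hh : 0 ≤ h) :
    ConvexOn ℝ (Ioi 0) fun t => log (t + h) - log t := by
  have hd : ∀ t ∈ Ioi (0 : ℝ),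
      HasDerivAt (fun t => log (t + h) - log t) ((t + h)⁻¹ - t⁻¹) t := by
    intro t ht
    have ht0 : 0 < t := ht
    have h1 := ((hasDerivAt_id t).add_const h).log (by simpa using (by positivity : t + h ≠ 0))
    simpa using h1.fun_sub (hasDerivAt_log ht0.ne')
  refine MonotoneOn.convexOn_of_deriv (convex_Ioi 0)
    (fun t ht => (hd t ht).continuousAt.continuousWithinAt)
    (fun t ht => (hd t (interior_subset ht)).differentiableAt.differentiableWithinAt) ?_
  rw [interior_Ioi]
  intro s hs t ht hst
  rw [(hd s hs).deriv, (hd t ht).deriv]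
  have hs0 : 0 < s := hs
  have ht0 : 0 < t := ht
  have hs' : (s + h)⁻¹ - s⁻¹ = -(h / (s * (s + h))) := by field_simp; ring
  have ht' : (t + h)⁻¹ - t⁻¹ = -(h / (t * (t + h))) := by field_simp; ring
  rw [hs', ht']
  gcongr

lemma concaveOn_log_Gamma_add_sub {h : ℝ} (hh : 0 ≤ h) :
    ConcaveOn ℝ (Ioi 0) fun t => log (Gamma (t + h)) - log (Gamma t) := by
  have hlim : ∀ t ∈ Ioi (0 : ℝ), Tendsto
      (fun n : ℕ => h * log n -
        ∑ m ∈ Finset.range (n + 1), (log (t + m + h) - log (t + m))) atTop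
      (𝓝 (log (Gamma (t + h)) - log (Gamma t))) := by
    intro t ht
    have ht0 : 0 < t := ht
    refine ((BohrMollerup.tendsto_log_gamma (by positivity : 0 < t + h)).sub
      (BohrMollerup.tendsto_log_gamma ht0)).congr fun n => ?_
    simp only [BohrMollerup.logGammaSeq, Finset.sum_sub_distrib, add_right_comm t h]
    ring
  refine ⟨convex_Ioi 0, fun x hx y hy a b ha hb hab => ?_⟩
  refine le_of_tendsto_of_tendsto' (((hlim x hx).const_mul a).add ((hlim y hy).const_mul b))
    (hlim _ (convex_Ioi 0 hx hy ha hb hab)) fun n => ?_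
  have hterm : ∀ m ∈ Finset.range (n + 1),
      log (a • x + b • y + m + h) - log (a • x + b • y + m) ≤
        a * (log (x + m + h) - log (x + m)) + b * (log (y + m + h) - log (y + m)) := by
    intro m _
    have hx0 : 0 < x := hx
    have hy0 : 0 < y := hy
    have hc := (convexOn_log_add_sub_log hh).2 (x := x + m) (y := y + m)
      (mem_Ioi.mpr (by positivity)) (mem_Ioi.mpr (by positivity)) ha hb hab
    have he : a • (x + (m : ℝ)) + b • (y + (m : ℝ)) = a • x + b • y + m := by
      simp only [smul_eq_mul]
      linear_combination (m : ℝ) * hab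
    rw [he] at hc
    simpa only [smul_eq_mul] using hc
  have hsum := Finset.sum_le_sum hterm
  rw [Finset.sum_add_distrib, ← Finset.mul_sum, ← Finset.mul_sum] at hsum
  have hlog : a * (h * log n) + b * (h * log n) = h * log n := by rw [← add_mul, hab, one_mul]
  linarith

lemma antitoneOn_digamma_add_sub {h : ℝ} (hh : 0 ≤ h) :
    AntitoneOn (fun t => digamma (t + h) - digamma t) (Ioi 0) := by
  have hd : ∀ t ∈ Ioi (0 : ℝ), HasDerivAt (fun t => log (Gamma (t + h)) - log (Gamma t))
      (digamma (t + h) - digamma t) t := by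
    intro t ht
    have ht0 : 0 < t := ht
    exact (HasDerivAt.comp_add_const t h
      (differentiableAt_log_Gamma (by positivity : 0 < t + h)).hasDerivAt).sub
      (differentiableAt_log_Gamma ht0).hasDerivAt
  intro s hs t ht hst
  have hanti := (concaveOn_log_Gamma_add_sub hh).antitoneOn_deriv
    (fun t ht => (hd t ht).differentiableAt) hs ht hst
  rwa [(hd s hs).deriv, (hd t ht).deriv] at hanti

lemma antitoneOn_deriv_digamma : AntitoneOn (deriv digamma) (Ioi 0) := by
  intro s hs t ht hst
  refine le_of_tendsto_of_tendsto
    (differentiableAt_digamma ht).hasDerivAt.tendsto_slope_zero_right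
    (differentiableAt_digamma hs).hasDerivAt.tendsto_slope_zero_right ?_
  filter_upwards [self_mem_nhdsWithin] with h hh
  have hh0 : 0 < h := hh
  exact smul_le_smul_of_nonneg_left (antitoneOn_digamma_add_sub hh0.le hs ht hst)
    (inv_nonneg.mpr hh0.le)

/-- A monotone function whose unit increments are controlled by an antitone function
grows over a step of length `b` by at most `b + 1` such increments. -/
lemma MonotoneOn.add_sub_le_of_add_one {f c : ℝ → ℝ} (hf : MonotoneOn f (Ioi 0))
    (hc : AntitoneOn c (Ioi 0)) (hstep : ∀ x, 0 < x → f (x + 1) = f x + c x)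
    {x b : ℝ} (hx : 0 < x) (hb : 0 ≤ b) : f (x + b) - f x ≤ (b + 1) * c x := by
  have hnat : ∀ n : ℕ, f (x + n) - f x ≤ n * c x := by
    intro n
    induction n with
    | zero => simp
    | succ k ih =>
      have hxk : 0 < x + k := by positivity
      have hck := hc hx hxk (by simp : x ≤ x + k)
      push_cast
      rw [← add_assoc, hstep _ hxk]
      linarith
  have hc0 : 0 ≤ c x := by
    have hx1 : x + 1 ∈ Ioi (0 : ℝ) := by simp only [mem_Ioi]; positivity
    have := hf hx hx1 (by simp)
    rw [hstep x hx] at this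
    linarith
  have hceil : f (x + b) ≤ f (x + ⌈b⌉₊) :=
    hf (mem_Ioi.mpr (by positivity)) (mem_Ioi.mpr (by positivity)) (by gcongr; exact Nat.le_ceil b)
  have hmul := mul_le_mul_of_nonneg_right (Nat.ceil_lt_add_one hb).le hc0
  linarith [hnat ⌈b⌉₊]

lemma mul_digamma_add_sub_mem {x z b : ℝ} (hx : 0 < x) (hxz : x ≤ z) (hb : 0 ≤ b) :
    x * (digamma (z + b) - digamma z) ∈ Icc 0 (b + 1) := by
  have hz : 0 < z := hx.trans_le hxz
  have hlow : digamma z ≤ digamma (z + b) :=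
    monotoneOn_digamma hz (mem_Ioi.mpr (by positivity)) (by linarith)
  refine ⟨mul_nonneg hx.le (sub_nonneg.mpr hlow), ?_⟩
  have hup : digamma (z + b) - digamma z ≤ (b + 1) * z⁻¹ :=
    monotoneOn_digamma.add_sub_le_of_add_one (c := fun t => t⁻¹)
      (fun s hs t _ hst => inv_anti₀ hs hst) (fun _ => digamma_add_one) hz hb
  calc x * (digamma (z + b) - digamma z) ≤ z * ((b + 1) * z⁻¹) :=
        mul_le_mul hxz hup (sub_nonneg.mpr hlow) hz.le
    _ = b + 1 := by field_simp

lemma sq_mul_deriv_digamma_sub_add_mem {x z b : ℝ} (hx : 0 < x) (hxz : x ≤ z) (hb : 0 ≤ b) :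
    x ^ 2 * (deriv digamma z - deriv digamma (z + b)) ∈ Icc 0 (b + 1) := by
  have hz : 0 < z := hx.trans_le hxz
  have hlow : deriv digamma (z + b) ≤ deriv digamma z :=
    antitoneOn_deriv_digamma hz (mem_Ioi.mpr (by positivity)) (by linarith)
  refine ⟨mul_nonneg (sq_nonneg x) (sub_nonneg.mpr hlow), ?_⟩
  have hup : -deriv digamma (z + b) - -deriv digamma z ≤ (b + 1) * (z ^ 2)⁻¹ :=
    antitoneOn_deriv_digamma.neg.add_sub_le_of_add_one (c := fun t => (t ^ 2)⁻¹)
      (fun s hs t _ hst => inv_anti₀ (pow_pos hs 2) (pow_le_pow_left₀ (le_of_lt hs) hst 2))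
      (fun t ht => by simp only [deriv_digamma_add_one ht]; ring) hz hb
  calc x ^ 2 * (deriv digamma z - deriv digamma (z + b)) ≤ z ^ 2 * ((b + 1) * (z ^ 2)⁻¹) :=
        mul_le_mul (pow_le_pow_left₀ hx.le hxz 2) (by linarith) (sub_nonneg.mpr hlow)
          (by positivity)
    _ = b + 1 := by field_simp

lemma bnbScore_mem {r a l y : ℝ} (hr : 0 < r) (ha : 1 < a) (hl : 0 < l) (hy : 0 ≤ y) :
    bnbScore r a l y ∈ Icc (-(a + r + 1)) (a + 1) := by
  have hx : 0 < (a - 1) / r * l := mul_pos (div_pos (by linarith) hr) hl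
  obtain ⟨h1, h2⟩ := mul_digamma_add_sub_mem hx le_rfl (by linarith : 0 ≤ a)
  obtain ⟨h3, h4⟩ := mul_digamma_add_sub_mem hx (by linarith : _ ≤ (a - 1) / r * l + y)
    (by linarith : 0 ≤ a + r)
  rw [← add_assoc] at h3 h4
  rw [bnbScore]
  constructor <;> linarith

/-- The score is differentiable in `l`, with scaled derivative `l * d` bounded uniformly
in `l` and `y`. -/
lemma exists_hasDerivAt_bnbScore {r a l y : ℝ} (hr : 0 < r) (ha : 1 < a) (hl : 0 < l)
    (hy : 0 ≤ y) :
    ∃ d, HasDerivAt (fun l => bnbScore r a l y) d l ∧ |l * d| ≤ 2 * a + 2 * r + 2 := by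
  have hc : 0 < (a - 1) / r := div_pos (by linarith) hr
  obtain ⟨hs1, hs2⟩ := bnbScore_mem hr ha hl hy
  simp only [bnbScore] at hs1 hs2 ⊢
  generalize (a - 1) / r = c at *
  have hx : 0 < c * l := mul_pos hc hl
  obtain ⟨h1, h2⟩ := sq_mul_deriv_digamma_sub_add_mem hx le_rfl (by linarith : 0 ≤ a)
  obtain ⟨h3, h4⟩ := sq_mul_deriv_digamma_sub_add_mem hx (by linarith : _ ≤ c * l + y)
    (by linarith : 0 ≤ a + r)
  rw [← add_assoc] at h3 h4
  have hlin : HasDerivAt (fun l => c * l) c l := by simpa using (hasDerivAt_id l).const_mul c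
  have hcomp : ∀ {u : ℝ → ℝ}, HasDerivAt u c l → 0 < u l →
      HasDerivAt (fun l => digamma (u l)) (deriv digamma (u l) * c) l :=
    fun hu hpos => (differentiableAt_digamma hpos).hasDerivAt.comp l hu
  have hd := hlin.mul ((((hcomp (hlin.add_const y) (by positivity)).add
    (hcomp (hlin.add_const a) (by positivity))).sub
    (hcomp (((hlin.add_const y).add_const a).add_const r) (by positivity))).sub (hcomp hlin hx))
  refine ⟨_, hd, ?_⟩
  simp only [Pi.add_apply, Pi.sub_apply]
  rw [abs_le]
  constructor <;> linarith

theorem gas_deriv_lam_bound (r a om ph ta : ℝ) (hr : 0 < r) (ha : 1 < a)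
    (hph0 : 0 ≤ ph) (hph1 : ph < 1) (hta : 0 < ta) :
    ∀ lam : ℝ, Real.exp ((om - ta * (a + r + 1)) / (1 - ph)) ≤ lam → ∀ y : ℝ, 0 ≤ y →
      |deriv (fun l => gasUpdate r a om ph ta y l) lam| ≤
        (ta * (3 * a + 2 * r + 3) + ph) * Real.exp (ta * (2 * a + r + 2)) := by
  intro lam hlam y hy
  have hl : 0 < lam := (exp_pos _).trans_le hlam
  obtain ⟨d, hd, hdb⟩ := exists_hasDerivAt_bnbScore hr ha hl hy
  have hg : HasDerivAt (fun l => gasUpdate r a om ph ta y l)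
      (gasUpdate r a om ph ta y lam * (ph * lam⁻¹ + ta * d)) lam :=
    ((((hasDerivAt_log hl.ne').const_mul ph).const_add om).add (hd.const_mul ta)).exp
  have hloglam : om - ta * (a + r + 1) ≤ log lam * (1 - ph) :=
    (div_le_iff₀ (by linarith)).mp ((le_log_iff_exp_le hl).mpr hlam)
  have hscore : ta * bnbScore r a lam y ≤ ta * (a + 1) :=
    mul_le_mul_of_nonneg_left (bnbScore_mem hr ha hl hy).2 hta.le
  have hratio : gasUpdate r a om ph ta y lam / lam ≤ exp (ta * (2 * a + r + 2)) := by
    nth_rewrite 2 [← exp_log hl]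
    rw [gasUpdate, ← exp_sub, exp_le_exp]
    linarith
  have hfactor : gasUpdate r a om ph ta y lam * (ph * lam⁻¹ + ta * d) =
      (ph + ta * (lam * d)) * (gasUpdate r a om ph ta y lam / lam) := by
    field_simp
  have hratio0 : 0 ≤ gasUpdate r a om ph ta y lam / lam := div_nonneg (exp_pos _).le hl.le
  have hcoef : |ph + ta * (lam * d)| ≤ ta * (3 * a + 2 * r + 3) + ph := by
    refine (abs_add_le _ _).trans ?_
    rw [abs_mul, abs_of_nonneg hph0, abs_of_pos hta]
    linarith [mul_le_mul_of_nonneg_left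
      (hdb.trans (by linarith : 2 * a + 2 * r + 2 ≤ 3 * a + 2 * r + 3)) hta.le]
  rw [hg.deriv, hfactor, abs_mul, abs_of_nonneg hratio0]
  exact mul_le_mul hcoef hratio hratio0 ((abs_nonneg _).trans hcoef)
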